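/- arXiv:2009.00390 — 2 statements merged into one kernel-verified Lean document; each statement's English description precedes it below -/
import Mathlib

section
/- Let a, b ∈ A satisfy a * a = −1, b * b = 1, and a * b = −(b * a). Set m₁ = −a and m₂ = cosh(θ/2) • a + sinh(θ/2) • b (so m₁⁻¹ = a and m₂⁻¹ = −m₂). Then the nested double flip acts as a boost with rapidity θ in the a-b plane: for all x, y ∈ ℝ, (cosh(θ/2) • a + sinh(θ/2) • b) * ( ((−a) * (x • a + y • b)) * a ) * ( −(cosh(θ/2) • a + sinh(θ/2) • b) ) = (x cosh θ + y sinh θ) • a + (x sinh θ + y cosh θ) • b. -/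
/-!
The inner flip sends `x • a + y • b` to `x • a - y • b` (`inner_flip`). Conjugating this by
`c • a + s • b` gives the matrix with diagonal entries `c ^ 2 + s ^ 2` and off-diagonal entries
`2 * s * c` (`outer_flip`). For `c = cosh (θ / 2)` and `s = sinh (θ / 2)` these entries are
`cosh θ` and `sinh θ` by the double-angle formulas.
-/

/-- The inner flip is a reflection in the `a`-axis: since `a * b * a = b`, it fixes `a` and
negates `b`. -/
lemma inner_flip {A : Type*} [Ring A] [Algebra ℝ A] (a b : A)
    (ha : a * a = -1) (hab : a * b = -(b * a)) (x y : ℝ) :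
    ((-a) * (x • a + y • b)) * a = x • a - y • b := by
  have haba : a * b * a = b := by rw [hab, neg_mul, mul_assoc, ha]; simp
  simp only [mul_add, add_mul, neg_mul, mul_smul_comm, smul_mul_assoc, ha, haba, one_mul]
  module

/-- The outer flip of `x • a - y • b` by `c • a + s • b`, before any relation between `c` and `s`
is used. -/
lemma outer_flip {A : Type*} [Ring A] [Algebra ℝ A] (a b : A)
    (ha : a * a = -1) (hb : b * b = 1) (hab : a * b = -(b * a)) (c s x y : ℝ) :
    (c • a + s • b) * (x • a - y • b) * (-(c • a + s • b)) =
      (x * (c ^ 2 + s ^ 2) + y * (2 * s * c)) • a +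
        (x * (2 * s * c) + y * (c ^ 2 + s ^ 2)) • b := by
  have hbaa : b * a * a = -b := by rw [mul_assoc, ha]; simp
  have hbab : b * a * b = -a := by rw [mul_assoc, hab, mul_neg, ← mul_assoc, hb, one_mul]
  simp only [mul_add, add_mul, mul_sub, sub_mul, mul_neg, neg_mul, mul_smul_comm,
    smul_mul_assoc, ha, hb, hab, hbaa, hbab, one_mul]
  module

theorem nested_flip_boost {A : Type*} [Ring A] [Algebra ℝ A] (a b : A)
    (ha : a * a = -1) (hb : b * b = 1) (hab : a * b = -(b * a)) (θ x y : ℝ) :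
    (Real.cosh (θ / 2) • a + Real.sinh (θ / 2) • b) * (((-a) * (x • a + y • b)) * a) *
        (-(Real.cosh (θ / 2) • a + Real.sinh (θ / 2) • b)) =
      (x * Real.cosh θ + y * Real.sinh θ) • a + (x * Real.sinh θ + y * Real.cosh θ) • b := by
  have hθ : θ = 2 * (θ / 2) := by ring
  have hc : Real.cosh θ = Real.cosh (θ / 2) ^ 2 + Real.sinh (θ / 2) ^ 2 := by
    conv_lhs => rw [hθ, Real.cosh_two_mul]
  have hs : Real.sinh θ = 2 * Real.sinh (θ / 2) * Real.cosh (θ / 2) := by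
    conv_lhs => rw [hθ, Real.sinh_two_mul]
  rw [inner_flip a b ha hab, outer_flip a b ha hb hab, hc, hs]
end

section
/- Let A be a 2×2 real matrix and a a quaternion. Form the 4×4 quaternionic matrices X = fromBlocks (A.map ↑) ((star a) • 1) (a • 1) (−((adjugate A).map ↑)) and X̃ = fromBlocks ((adjugate A).map ↑) ((star a) • 1) (a • 1) (−(A.map ↑)) (X̃ is the trace reversal of X, using that split-quaternion conjugation corresponds to the adjugate). Then X * X̃ = (det A + normSq a) • 1 and X̃ * X = (det A + normSq a) • 1. This realizes the Clifford relation for the split-quaternion⊗quaternion cell of the 2×2 magic square, whose quadratic form det A + normSq a has signature (6,2). -/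
/-!
In the block product of `X` and its trace reversal, the diagonal blocks are
`A * adjugate A + star a * a` and `a * star a + adjugate A * A`, both equal to `det A + normSq a`.
The off-diagonal blocks are commutators of a real matrix with a scalar quaternionic matrix, and
they vanish because the reals are central in `ℍ`. Both products in the theorem are instances of
`fromBlocks_mul_fromBlocks_of_mul_eq_smul_one`, with `A` and `adjugate A` interchanged.
-/

open scoped Quaternion

theorem map_mul_smul_one_comm (M : Matrix (Fin 2) (Fin 2) ℝ) (q : ℍ[ℝ]) :
    M.map (algebraMap ℝ ℍ[ℝ]) * (q • (1 : Matrix (Fin 2) (Fin 2) ℍ[ℝ])) =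
      (q • (1 : Matrix (Fin 2) (Fin 2) ℍ[ℝ])) * M.map (algebraMap ℝ ℍ[ℝ]) := by
  rw [Matrix.smul_one_eq_diagonal]
  ext1 i j
  rw [Matrix.mul_diagonal, Matrix.diagonal_mul, Matrix.map_apply]
  exact Algebra.commutes _ _

theorem map_mul_map_of_mul_eq_smul_one {M N : Matrix (Fin 2) (Fin 2) ℝ} {d : ℝ}
    (h : M * N = d • (1 : Matrix (Fin 2) (Fin 2) ℝ)) :
    M.map (algebraMap ℝ ℍ[ℝ]) * N.map (algebraMap ℝ ℍ[ℝ]) =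
      d • (1 : Matrix (Fin 2) (Fin 2) ℍ[ℝ]) := by
  rw [← Matrix.map_mul, h]
  ext1 i j
  rw [Matrix.map_apply, Matrix.smul_apply, Matrix.smul_apply, Matrix.one_apply, Matrix.one_apply]
  split_ifs <;> simp [Algebra.algebraMap_eq_smul_one]

theorem smul_one_mul_smul_one_of_mul_eq_coe {p q : ℍ[ℝ]} {r : ℝ} (h : p * q = (r : ℍ[ℝ])) :
    (p • (1 : Matrix (Fin 2) (Fin 2) ℍ[ℝ])) * (q • (1 : Matrix (Fin 2) (Fin 2) ℍ[ℝ])) =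
      r • (1 : Matrix (Fin 2) (Fin 2) ℍ[ℝ]) := by
  rw [smul_mul_assoc, one_mul, smul_smul, h]
  ext1 i j
  rw [Matrix.smul_apply, Matrix.smul_apply, smul_eq_mul, Quaternion.coe_mul_eq_smul]

/-- The Clifford relation for any pair of real matrices that are inverse to each other up to the
scalar `d`. -/
theorem fromBlocks_mul_fromBlocks_of_mul_eq_smul_one {M N : Matrix (Fin 2) (Fin 2) ℝ} {d : ℝ}
    (a : ℍ[ℝ]) (hMN : M * N = d • (1 : Matrix (Fin 2) (Fin 2) ℝ))
    (hNM : N * M = d • (1 : Matrix (Fin 2) (Fin 2) ℝ)) :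
    Matrix.fromBlocks (M.map (algebraMap ℝ ℍ[ℝ])) ((star a) • 1) (a • 1)
          (-(N.map (algebraMap ℝ ℍ[ℝ]))) *
        Matrix.fromBlocks (N.map (algebraMap ℝ ℍ[ℝ])) ((star a) • 1) (a • 1)
          (-(M.map (algebraMap ℝ ℍ[ℝ]))) =
      (d + Quaternion.normSq a) • (1 : Matrix (Fin 2 ⊕ Fin 2) (Fin 2 ⊕ Fin 2) ℍ[ℝ]) := by
  rw [Matrix.fromBlocks_multiply, ← Matrix.fromBlocks_one, Matrix.fromBlocks_smul]
  simp only [mul_neg, neg_mul, neg_neg, smul_zero, map_mul_smul_one_comm, add_neg_cancel,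
    map_mul_map_of_mul_eq_smul_one hMN, map_mul_map_of_mul_eq_smul_one hNM,
    smul_one_mul_smul_one_of_mul_eq_coe (Quaternion.self_mul_star a),
    smul_one_mul_smul_one_of_mul_eq_coe (Quaternion.star_mul_self a), add_smul]
  rw [add_comm (Quaternion.normSq a • (1 : Matrix (Fin 2) (Fin 2) ℍ[ℝ]))]

theorem vector_matrix_clifford_relation_split_quaternion
    (A : Matrix (Fin 2) (Fin 2) ℝ) (a : ℍ[ℝ]) :
    (Matrix.fromBlocks (A.map (algebraMap ℝ ℍ[ℝ])) ((star a) • 1) (a • 1)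
          (-((A.adjugate).map (algebraMap ℝ ℍ[ℝ]))) *
        Matrix.fromBlocks ((A.adjugate).map (algebraMap ℝ ℍ[ℝ])) ((star a) • 1) (a • 1)
          (-(A.map (algebraMap ℝ ℍ[ℝ]))) =
      (A.det + Quaternion.normSq a) • (1 : Matrix (Fin 2 ⊕ Fin 2) (Fin 2 ⊕ Fin 2) ℍ[ℝ])) ∧
    (Matrix.fromBlocks ((A.adjugate).map (algebraMap ℝ ℍ[ℝ])) ((star a) • 1) (a • 1)
          (-(A.map (algebraMap ℝ ℍ[ℝ]))) *
        Matrix.fromBlocks (A.map (algebraMap ℝ ℍ[ℝ])) ((star a) • 1) (a • 1)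
          (-((A.adjugate).map (algebraMap ℝ ℍ[ℝ]))) =
      (A.det + Quaternion.normSq a) • (1 : Matrix (Fin 2 ⊕ Fin 2) (Fin 2 ⊕ Fin 2) ℍ[ℝ])) := by
  exact ⟨fromBlocks_mul_fromBlocks_of_mul_eq_smul_one a (Matrix.mul_adjugate A)
      (Matrix.adjugate_mul A),
    fromBlocks_mul_fromBlocks_of_mul_eq_smul_one a (Matrix.adjugate_mul A)
      (Matrix.mul_adjugate A)⟩
end
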